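/- Let C be an arbitrary set of corner minors of M, let 𝒲 denote the set of admissible sets W ⊆ V(C) for which P_W(C) is a minimal prime of I(C), and let h₁ and v₁ be the vertices of G(C) corresponding to the maximal horizontal and vertical intervals H₁ and V₁ of C containing x₁₁. Then ⋂_{W ∈ 𝒲} P_W(C) = I(C) + (x₁₁ f_σ : σ a cycle in G(C) passing through neither v₁ nor h₁). In particular, the radical of I(C) equals the right-hand side. -/

import Mathlib

open MvPolynomial

/-- A 2-minor `[a₁,a₂|b₁,b₂]` (with `a₁ < a₂`, `b₁ < b₂`) of the `m × n` matrix
of indeterminates `M = (x_{ij})`. -/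
structure Minor2 (m n : ℕ) where
  a1 : Fin m
  a2 : Fin m
  b1 : Fin n
  b2 : Fin n
  ha : a1 < a2
  hb : b1 < b2

namespace Minor2

variable {m n : ℕ}

/-- The vertex set of a 2-minor. -/
def vertexSet (δ : Minor2 m n) : Set (Fin m × Fin n) :=
  {(δ.a1, δ.b1), (δ.a1, δ.b2), (δ.a2, δ.b1), (δ.a2, δ.b2)}

/-- `{p,q}` is one of the two vertical edges of the minor `δ`. -/
def VertEdge (δ : Minor2 m n) (p q : Fin m × Fin n) : Prop :=
  ({p, q} : Set (Fin m × Fin n)) = {(δ.a1, δ.b1), (δ.a2, δ.b1)} ∨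
  ({p, q} : Set (Fin m × Fin n)) = {(δ.a1, δ.b2), (δ.a2, δ.b2)}

/-- `{p,q}` is one of the two horizontal edges of the minor `δ`. -/
def HorizEdge (δ : Minor2 m n) (p q : Fin m × Fin n) : Prop :=
  ({p, q} : Set (Fin m × Fin n)) = {(δ.a1, δ.b1), (δ.a1, δ.b2)} ∨
  ({p, q} : Set (Fin m × Fin n)) = {(δ.a2, δ.b1), (δ.a2, δ.b2)}

/-- `{p,q}` is an edge (vertical or horizontal) of the minor `δ`. -/
def IsEdge (δ : Minor2 m n) (p q : Fin m × Fin n) : Prop :=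
  δ.VertEdge p q ∨ δ.HorizEdge p q

/-- The binomial `f_δ = x_{a₁b₁}x_{a₂b₂} − x_{a₁b₂}x_{a₂b₁}` of the 2-minor `δ`. -/
noncomputable def binom (K : Type*) [Field K] (δ : Minor2 m n) : MvPolynomial (Fin m × Fin n) K :=
  X (δ.a1, δ.b1) * X (δ.a2, δ.b2) - X (δ.a1, δ.b2) * X (δ.a2, δ.b1)

end Minor2

/-- The vertex set `V(C)` of a collection `C` of 2-minors. -/
def vertexSetOf {m n : ℕ} (C : Set (Minor2 m n)) : Set (Fin m × Fin n) :=
  ⋃ δ ∈ C, δ.vertexSet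

/-- The binomial ideal `I(C)` generated by the binomials of the minors in `C`. -/
noncomputable def minorIdeal (K : Type*) [Field K] {m n : ℕ} (C : Set (Minor2 m n)) :
    Ideal (MvPolynomial (Fin m × Fin n) K) :=
  Ideal.span {f | ∃ δ ∈ C, f = Minor2.binom K δ}

/-- Two positions are joined by a vertical edge of some minor of `C`. -/
def vertAdj {m n : ℕ} (C : Set (Minor2 m n)) (p q : Fin m × Fin n) : Prop :=
  ∃ δ ∈ C, δ.VertEdge p q

/-- Two positions are joined by a horizontal edge of some minor of `C`. -/
def horizAdj {m n : ℕ} (C : Set (Minor2 m n)) (p q : Fin m × Fin n) : Prop :=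
  ∃ δ ∈ C, δ.HorizEdge p q

/-- The maximal vertical interval of `C` containing a position, encoded as the class of the
position under connectivity by vertical edges of minors of `C`. -/
def vClass {m n : ℕ} (C : Set (Minor2 m n)) (p : Fin m × Fin n) : Quot (vertAdj C) :=
  Quot.mk _ p

/-- The maximal horizontal interval of `C` containing a position. -/
def hClass {m n : ℕ} (C : Set (Minor2 m n)) (p : Fin m × Fin n) : Quot (horizAdj C) :=
  Quot.mk _ p

/-- The monomial map `φ` with `φ(x_{ab}) = h_i v_j`, where `H_i` and `V_j` are the maximal
horizontal and vertical intervals of `C` containing `x_{ab}` (variables not appearing in any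
minor of `C` are sent to products of fresh variables, so that the kernel of `φ` is the
extension to `S` of the toric ideal `J_C ⊆ S_C`). -/
noncomputable def phiC (K : Type*) [Field K] {m n : ℕ} (C : Set (Minor2 m n)) :
    MvPolynomial (Fin m × Fin n) K →ₐ[K]
      MvPolynomial (Quot (horizAdj C) ⊕ Quot (vertAdj C)) K :=
  aeval fun p => X (Sum.inl (hClass C p)) * X (Sum.inr (vClass C p))

/-- The toric ideal `J_C = ker φ`. -/
noncomputable def toricIdeal (K : Type*) [Field K] {m n : ℕ} (C : Set (Minor2 m n)) :
    Ideal (MvPolynomial (Fin m × Fin n) K) :=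
  RingHom.ker (phiC K C)

/-- A subset `W ⊆ V(C)` is admissible if for every `δ ∈ C` either `W ∩ V(δ) = ∅`
or `W` contains an edge of `δ`. -/
def Admissible {m n : ℕ} (C : Set (Minor2 m n)) (W : Set (Fin m × Fin n)) : Prop :=
  W ⊆ vertexSetOf C ∧
    ∀ δ ∈ C, W ∩ δ.vertexSet = ∅ ∨ ∃ p q, p ∈ W ∧ q ∈ W ∧ δ.IsEdge p q

/-- `C' = {δ ∈ C : V(δ) ∩ W = ∅}`. -/
def minorsAvoiding {m n : ℕ} (C : Set (Minor2 m n)) (W : Set (Fin m × Fin n)) :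
    Set (Minor2 m n) :=
  {δ ∈ C | δ.vertexSet ∩ W = ∅}

/-- The ideal generated by the variables with index in `W`. -/
noncomputable def varIdeal (K : Type*) [Field K] {m n : ℕ} (W : Set (Fin m × Fin n)) :
    Ideal (MvPolynomial (Fin m × Fin n) K) :=
  Ideal.span ((fun p => (X p : MvPolynomial (Fin m × Fin n) K)) '' W)

/-- The prime ideal `P_W(C) = (x_{ij} : x_{ij} ∈ W) + J_{C'}`,
where `C' = {δ ∈ C : V(δ) ∩ W = ∅}`. -/
noncomputable def PW (K : Type*) [Field K] {m n : ℕ} (C : Set (Minor2 m n))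
    (W : Set (Fin m × Fin n)) : Ideal (MvPolynomial (Fin m × Fin n) K) :=
  varIdeal K W + toricIdeal K (minorsAvoiding C W)

/-- A cycle `σ : h_{i₁}, v_{j₁}, h_{i₂}, v_{j₂}, …, h_{i_r}, v_{j_r}` (`r ≥ 2`) of the
bipartite graph `G(C)`, recorded by the intersection vertices
`p k = H_{i_k} ∩ V_{j_k}` and `q k = H_{i_{k+1}} ∩ V_{j_k}` (indices cyclic, `r = len + 2`). -/
structure CycleIn {m n : ℕ} (C : Set (Minor2 m n)) where
  len : ℕ
  p : Fin (len + 2) → Fin m × Fin n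
  q : Fin (len + 2) → Fin m × Fin n
  p_mem : ∀ k, p k ∈ vertexSetOf C
  q_mem : ∀ k, q k ∈ vertexSetOf C
  shareV : ∀ k, vClass C (p k) = vClass C (q k)
  shareH : ∀ k, hClass C (q k) = hClass C (p (k + 1))
  injH : Function.Injective fun k => hClass C (p k)
  injV : Function.Injective fun k => vClass C (p k)

/-- The binomial `f_σ` associated to a cycle `σ` of `G(C)`. -/
noncomputable def cycleBinom (K : Type*) [Field K] {m n : ℕ} {C : Set (Minor2 m n)}
    (σ : CycleIn C) : MvPolynomial (Fin m × Fin n) K :=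
  (∏ k, X (σ.p k)) - (∏ k, X (σ.q k))

/-!
Write `z = x₁₁` and let `J` be the toric ideal of `C`. Modulo `I(C)` every entry satisfies
`z x_{ab} = x_{1b} x_{a1}`. Two monomials with the same image under `φ` have the same multiset of
row intervals and of column intervals; walking alternately along the edges of the one and of the
other closes up to a cycle of `G(C)`, and splitting off such cycles shows that the `f_σ` generate
`J`. For a cycle of length `r` the relations give `z ^ r f_σ ∈ I(C)`, so a prime containing `I(C)`
contains `z` or `J`. On the other hand `I(C) + (z)` is generated by squarefree monomials, hence
radical, and it follows that the radical of `I(C)` is `I(C) + z J`. If `σ` passes through `v₁` or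
`h₁`, one of its vertices lies in the first column or row, and starting there the exchanges
`z x_{1b} x_{ab'} ≡ z x_{1b'} x_{ab}` telescope to `z f_σ ∈ I(C)`, so these cycles contribute
nothing to `z J`. Finally, a minimal prime `P` of `I(C)` is `P_W(C)`, where `W` consists of the
entries in `V(C)` which lie in `P`.
-/

theorem exists_mem_periodicPts {α : Type*} [Finite α] [Nonempty α] (T : α → α) :
    ∃ a, a ∈ Function.periodicPts T := by
  obtain ⟨a⟩ := ‹Nonempty α›
  obtain ⟨i, j, hij, h⟩ : ∃ i j, i < j ∧ T^[i] a = T^[j] a := by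
    simpa using Set.finite_univ.exists_lt_map_eq_of_forall_mem (f := fun k : ℕ => T^[k] a) (by simp)
  refine ⟨T^[i] a, Function.mk_mem_periodicPts (n := j - i) (by omega) ?_⟩
  rw [Function.IsPeriodicPt, Function.IsFixedPt, ← Function.iterate_add_apply,
    Nat.sub_add_cancel hij.le, h]

theorem exists_injective_forall_apply_eq_add_one {α : Type*} [Finite α] [Nonempty α] (T : α → α) :
    ∃ (n : ℕ) (orbit : Fin (n + 1) → α), Function.Injective orbit ∧
      ∀ k, T (orbit k) = orbit (k + 1) := by
  obtain ⟨a, ha⟩ := exists_mem_periodicPts T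
  obtain ⟨n, hn⟩ := Nat.exists_eq_add_one.2 (Function.minimalPeriod_pos_of_mem_periodicPts ha)
  have horbit : Function.Injective fun k : Fin (n + 1) => T^[k] a := fun k l h => Fin.ext
    (Function.iterate_injOn_Iio_minimalPeriod (hn.symm ▸ k.isLt) (hn.symm ▸ l.isLt) h)
  refine ⟨n, fun k => T^[k] a, horbit, fun k => ?_⟩
  simp only [Fin.val_add, Fin.val_one', Nat.add_mod_mod]
  rw [← Function.iterate_succ_apply' T,
    ← Function.iterate_mod_minimalPeriod_eq (n := (k : ℕ).succ), hn]

/-- A cycle `f (p 0), g (p 0), f (p 1), g (p 1), …` in the bipartite multigraph whose edges are the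
elements of `ι`, an edge `e` joining `f e` to `g e`: it leaves `f (p k)` along `p k` and returns
along `q k` to `f (p (k + 1))`. Cycles of length one (`n = 0`) are allowed. -/
structure IsBipartiteCycle {ι α β : Type*} (f : ι → α) (g : ι → β) {n : ℕ}
    (p q : Fin (n + 1) → ι) : Prop where
  right_eq : ∀ k, g (p k) = g (q k)
  left_eq : ∀ k, f (q k) = f (p (k + 1))
  left_injective : Function.Injective fun k => f (p k)
  right_injective : Function.Injective fun k => g (p k)

section BipartiteCycle

variable {ι α β : Type*} {f : ι → α} {g : ι → β}

theorem exists_isBipartiteCycle {s t : Multiset ι} (hs : s ≠ 0)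
    (hf : s.map f = t.map f) (hg : s.map g = t.map g) :
    ∃ (n : ℕ) (p q : Fin (n + 1) → ι),
      IsBipartiteCycle f g p q ∧ (∀ k, p k ∈ s) ∧ ∀ k, q k ∈ t := by
  have hsf (a : {a // a ∈ s.map f}) : ∃ e ∈ s, f e = a := Multiset.mem_map.1 a.2
  have htg (b : {b // b ∈ s.map g}) : ∃ e ∈ t, g e = b := Multiset.mem_map.1 (hg ▸ b.2)
  choose out out_mem f_out using hsf
  choose back back_mem g_back using htg
  -- Leave the vertex `a` along an edge in `s` and return along an edge in `t`. The next vertex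
  -- depends only on `g (out a)`, so these right-hand vertices are distinct on a periodic orbit.
  let mate (a : {a // a ∈ s.map f}) : ι := back ⟨g (out a), Multiset.mem_map_of_mem g (out_mem a)⟩
  have mate_mem (a) : mate a ∈ t := back_mem _
  have g_mate (a) : g (mate a) = g (out a) := g_back _
  let next (a : {a // a ∈ s.map f}) : {a // a ∈ s.map f} :=
    ⟨f (mate a), hf ▸ Multiset.mem_map_of_mem f (mate_mem a)⟩
  have next_eq {a a'} (h : g (out a) = g (out a')) : next a = next a' := by
    simp only [next, mate, h]
  obtain ⟨e, he⟩ := Multiset.exists_mem_of_ne_zero hs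
  have : Nonempty {a // a ∈ s.map f} := ⟨f e, Multiset.mem_map_of_mem f he⟩
  have : Finite {a // a ∈ s.map f} := (Multiset.finite_toSet _).to_subtype
  obtain ⟨n, orbit, orbit_injective, next_orbit⟩ :=
    exists_injective_forall_apply_eq_add_one next
  refine ⟨n, fun k => out (orbit k), fun k => mate (orbit k),
    ⟨fun k => (g_mate _).symm, fun k => ?_, fun k l h => ?_, fun k l h => ?_⟩,
    fun k => out_mem _, fun k => mate_mem _⟩
  · rw [f_out, ← next_orbit]
  · exact orbit_injective (Subtype.ext (by simpa only [f_out] using h))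
  · have := next_eq h
    rw [next_orbit, next_orbit] at this
    exact add_right_cancel (orbit_injective this)

theorem IsBipartiteCycle.map_univ_left {n : ℕ} {p q : Fin (n + 1) → ι}
    (h : IsBipartiteCycle f g p q) :
    (Finset.univ.val.map p).map f = (Finset.univ.val.map q).map f := by
  have hshift : (Finset.univ : Finset (Fin (n + 1))).val.map (· + 1) = Finset.univ.val :=
    congrArg Finset.val (Finset.map_univ_equiv (Equiv.addRight (1 : Fin (n + 1))))
  conv_lhs => rw [← hshift]
  simp only [Multiset.map_map]
  exact Multiset.map_congr rfl fun k _ => (h.left_eq k).symm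

theorem IsBipartiteCycle.map_univ_right {n : ℕ} {p q : Fin (n + 1) → ι}
    (h : IsBipartiteCycle f g p q) :
    (Finset.univ.val.map p).map g = (Finset.univ.val.map q).map g := by
  simp only [Multiset.map_map, Function.comp_def, h.right_eq]

theorem exists_add_eq_of_injective {n : ℕ} {p : Fin n → ι} {s : Multiset ι}
    (hp : Function.Injective p) (hs : ∀ k, p k ∈ s) : ∃ s', s = Finset.univ.val.map p + s' := by
  refine Multiset.le_iff_exists_add.1 ((Multiset.le_iff_subset
    ((Multiset.nodup_map_iff_of_injective hp).2 Finset.univ.nodup)).2 fun e he => ?_)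
  obtain ⟨k, -, rfl⟩ := Multiset.mem_map.1 he
  exact hs k

theorem prod_map_eq_of_forall_isBipartiteCycle {M : Type*} [CommMonoid M] {x : ι → M}
    (hx : ∀ (n : ℕ) (p q : Fin (n + 1) → ι), IsBipartiteCycle f g p q →
      ∏ k, x (p k) = ∏ k, x (q k))
    {s t : Multiset ι} (hf : s.map f = t.map f) (hg : s.map g = t.map g) :
    (s.map x).prod = (t.map x).prod := by
  induction s using Multiset.strongInductionOn generalizing t with
  | ih s ih =>
    rcases eq_or_ne s 0 with rfl | hs
    · rw [Multiset.map_eq_zero.1 hf.symm]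
    obtain ⟨n, p, q, hpq, hps, hqt⟩ := exists_isBipartiteCycle hs hf hg
    obtain ⟨s, rfl⟩ := exists_add_eq_of_injective hpq.left_injective.of_comp hps
    have hq : Function.Injective fun k => g (q k) := by
      simpa only [hpq.right_eq] using hpq.right_injective
    obtain ⟨t, rfl⟩ := exists_add_eq_of_injective hq.of_comp hqt
    simp only [Multiset.map_add, hpq.map_univ_left, add_right_inj] at hf
    simp only [Multiset.map_add, hpq.map_univ_right, add_right_inj] at hg
    have hlt : s < Finset.univ.val.map p + s := by
      simp [lt_add_iff_pos_left, pos_iff_ne_zero]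
    rw [Multiset.map_add, Multiset.map_add, Multiset.prod_add, Multiset.prod_add, ih s hlt hf hg,
      Multiset.map_map, Multiset.map_map]
    exact congrArg (· * _) (hx n p q hpq)

end BipartiteCycle

section MonomialIdeal

variable {σ R : Type*} [CommRing R]

theorem ker_le_ker_of_monomial {N τ : Type*} [AddCommGroup N] [Module R N]
    {φ : MvPolynomial σ R →ₗ[R] MvPolynomial τ R} {ψ : MvPolynomial σ R →ₗ[R] N}
    {c : (σ →₀ ℕ) → τ →₀ ℕ} (hφ : ∀ d, φ (monomial d 1) = monomial (c d) 1)
    (hψ : ∀ d e, c d = c e → ψ (monomial d 1) = ψ (monomial e 1)) :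
    LinearMap.ker φ ≤ LinearMap.ker ψ := by
  have hfactor : ((fun d => ψ (monomial d 1)) : (σ →₀ ℕ) → N).FactorsThrough c := hψ
  let χ := (basisMonomials τ R).constr R (Function.extend c (fun d => ψ (monomial d 1)) 0)
  have hχ : ψ = χ ∘ₗ φ := (basisMonomials σ R).ext fun d => by
    rw [coe_basisMonomials, LinearMap.comp_apply, hφ]
    exact ((hfactor.extend_apply 0 d).symm.trans
      ((basisMonomials τ R).constr_basis R _ (c d)).symm)
  rw [hχ]
  exact LinearMap.ker_le_ker_comp φ χ

/-- The evaluation of polynomials which sets the variables with index in `W` to zero. -/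
noncomputable def killVars (R : Type*) [CommRing R] (W : Set σ) :
    MvPolynomial σ R →ₐ[R] MvPolynomial σ R :=
  aeval (Wᶜ.indicator X)

theorem killVars_X_of_mem {W : Set σ} {i : σ} (hi : i ∈ W) : killVars R W (X i) = 0 := by
  simp [killVars, hi]

theorem killVars_X_of_notMem {W : Set σ} {i : σ} (hi : i ∉ W) : killVars R W (X i) = X i := by
  simp [killVars, hi]

theorem sub_killVars_mem_span (W : Set σ) (f : MvPolynomial σ R) :
    f - killVars R W f ∈ Ideal.span (X '' W) := by
  suffices (Ideal.Quotient.mkₐ R (Ideal.span (X '' W))).comp (killVars R W) =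
      Ideal.Quotient.mkₐ R (Ideal.span (X '' W)) from
    (Ideal.Quotient.mk_eq_mk_iff_sub_mem _ _).1 (DFunLike.congr_fun this f).symm
  refine algHom_ext fun i => ?_
  by_cases hi : i ∈ W
  · simp only [AlgHom.comp_apply, killVars_X_of_mem hi, map_zero]
    exact (Ideal.Quotient.eq_zero_iff_mem.2 (Ideal.subset_span (Set.mem_image_of_mem X hi))).symm
  · simp only [AlgHom.comp_apply, killVars_X_of_notMem hi]

theorem ker_killVars (W : Set σ) : RingHom.ker (killVars R W) = Ideal.span (X '' W) := by
  refine le_antisymm (fun f hf => ?_) (Ideal.span_le.2 ?_)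
  · simpa only [RingHom.mem_ker.1 hf, sub_zero] using sub_killVars_mem_span W f
  · rintro _ ⟨i, hi, rfl⟩
    exact killVars_X_of_mem hi

theorem isRadical_span_X [IsReduced R] (W : Set σ) :
    (Ideal.span (X '' W) : Ideal (MvPolynomial σ R)).IsRadical := by
  rw [← ker_killVars]
  exact Ideal.isRadical_bot.comap (killVars R W)

theorem isRadical_span_monomial [IsReduced R] {S : Set (σ →₀ ℕ)}
    (hS : ∀ d ∈ S, ∀ i, d i ≤ 1) :
    (Ideal.span ((fun d => monomial d (1 : R)) '' S)).IsRadical := by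
  intro f hf
  rw [mem_ideal_span_monomial_image]
  intro α hα
  by_contra! hd
  -- As no `d ∈ S` divides `α`, each has a variable outside the support of `α`, so the radical ideal
  -- generated by those variables contains the ideal but no polynomial with the monomial `α`.
  let W : Set σ := {i | α i = 0}
  have hle : Ideal.span ((fun d => monomial d (1 : R)) '' S) ≤ Ideal.span (X '' W) := by
    rw [Ideal.span_le]
    rintro _ ⟨d, hdS, rfl⟩
    rw [SetLike.mem_coe, mem_ideal_span_X_image]
    intro β hβ
    obtain rfl := Finset.mem_singleton.1 (support_monomial_subset hβ)
    by_contra! hW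
    refine hd _ hdS fun i => ?_
    by_cases hi : α i = 0
    · exact (hW i hi).le.trans zero_le
    · exact (hS _ hdS i).trans (Nat.one_le_iff_ne_zero.2 hi)
  have hfW := (isRadical_span_X (R := R) W) (Ideal.radical_mono hle hf)
  obtain ⟨i, hi, hαi⟩ := mem_ideal_span_X_image.1 hfW α hα
  exact hαi hi

end MonomialIdeal

section EdgeIdeal

variable {ι α β R : Type*} [CommRing R] {f : ι → α} {g : ι → β}

variable (R f g) in
/-- The homomorphism from the polynomial ring on the edges of a bipartite multigraph to the
polynomial ring on its vertices which maps an edge to the product of its endpoints. -/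
noncomputable def edgeHom : MvPolynomial ι R →ₐ[R] MvPolynomial (α ⊕ β) R :=
  aeval fun i => X (Sum.inl (f i)) * X (Sum.inr (g i))

theorem edgeHom_monomial (d : ι →₀ ℕ) :
    edgeHom R f g (monomial d 1) =
      monomial (Finsupp.sumElim (d.mapDomain f) (d.mapDomain g)) 1 := by
  rw [edgeHom, aeval_monomial, map_one, one_mul]
  induction d using Finsupp.induction_linear with
  | zero => simp
  | add d e hd he =>
    rw [Finsupp.prod_add_index' (fun _ => pow_zero _) fun _ _ _ => pow_add _ _ _, hd, he,
      Finsupp.mapDomain_add, Finsupp.mapDomain_add, Finsupp.sumElim_add, monomial_mul, one_mul]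
  | single i k =>
    simp [mul_pow, X_pow_eq_monomial, Finsupp.mapDomain_single, monomial_mul]

theorem IsBipartiteCycle.edgeHom_prod_eq {n : ℕ} {p q : Fin (n + 1) → ι}
    (h : IsBipartiteCycle f g p q) :
    edgeHom R f g (∏ k, X (p k)) = edgeHom R f g (∏ k, X (q k)) := by
  have hf : ∏ k, X (R := R) (Sum.inl (f (p k)) : α ⊕ β) = ∏ k, X (Sum.inl (f (q k))) := by
    simp only [h.left_eq]
    exact (Equiv.prod_comp (Equiv.addRight 1) fun k => X (Sum.inl (f (p k)))).symm
  simp only [edgeHom, map_prod, aeval_X, Finset.prod_mul_distrib, hf, h.right_eq]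

theorem map_monomial_one_eq_prod {A : Type*} [CommSemiring A] (φ : MvPolynomial ι R →+* A)
    (d : ι →₀ ℕ) : φ (monomial d 1) = (d.toMultiset.map fun i => φ (X i)).prod := by
  rw [Finsupp.toMultiset_map, Finsupp.prod_toMultiset,
    Finsupp.prod_mapDomain_index pow_zero fun i => pow_add i, monomial_eq, C_1, one_mul,
    map_finsuppProd]
  simp only [map_pow]

theorem ker_edgeHom :
    RingHom.ker (edgeHom R f g) =
      Ideal.span {b | ∃ (n : ℕ) (p q : Fin (n + 1) → ι), IsBipartiteCycle f g p q ∧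
        b = ∏ k, X (p k) - ∏ k, X (q k)} := by
  refine le_antisymm ?_ (Ideal.span_le.2 ?_)
  · set I := Ideal.span {b : MvPolynomial ι R | _}
    have hcycle (n : ℕ) (p q : Fin (n + 1) → ι) (h : IsBipartiteCycle f g p q) :
        ∏ k, Ideal.Quotient.mk I (X (p k)) = ∏ k, Ideal.Quotient.mk I (X (q k)) := by
      rw [← map_prod, ← map_prod, Ideal.Quotient.mk_eq_mk_iff_sub_mem]
      exact Ideal.subset_span ⟨n, p, q, h, rfl⟩
    have hmonomial (d e : ι →₀ ℕ) (hde : Finsupp.sumElim (d.mapDomain f) (d.mapDomain g) =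
        Finsupp.sumElim (e.mapDomain f) (e.mapDomain g)) :
        Ideal.Quotient.mk I (monomial d 1) = Ideal.Quotient.mk I (monomial e 1) := by
      rw [map_monomial_one_eq_prod, map_monomial_one_eq_prod]
      refine prod_map_eq_of_forall_isBipartiteCycle (f := f) (g := g) hcycle ?_ ?_
      · rw [Finsupp.toMultiset_map, Finsupp.toMultiset_map]
        exact congrArg _ (Finsupp.ext fun a => DFunLike.congr_fun hde (Sum.inl a))
      · rw [Finsupp.toMultiset_map, Finsupp.toMultiset_map]
        exact congrArg _ (Finsupp.ext fun b => DFunLike.congr_fun hde (Sum.inr b))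
    intro b hb
    exact Ideal.Quotient.eq_zero_iff_mem.1 (ker_le_ker_of_monomial
      (φ := (edgeHom R f g).toLinearMap) (ψ := (Ideal.Quotient.mkₐ R I).toLinearMap)
      edgeHom_monomial hmonomial hb)
  · rintro _ ⟨n, p, q, h, rfl⟩
    rw [SetLike.mem_coe, RingHom.mem_ker, map_sub, h.edgeHom_prod_eq, sub_self]

end EdgeIdeal

section ToricIdeal

variable {m n : ℕ} {C : Set (Minor2 m n)} {p q : Fin m × Fin n}

theorem eq_or_mem_of_quot_mk_eq {α : Type*} {r : α → α → Prop} {S : Set α}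
    (hr : ∀ x y, r x y → x ∈ S ∧ y ∈ S) {x y : α} (hxy : Quot.mk r x = Quot.mk r y) :
    x = y ∨ x ∈ S ∧ y ∈ S := by
  have h := Quot.eqvGen_exact hxy
  clear hxy
  induction h with
  | rel x y h => exact .inr (hr x y h)
  | refl x => exact .inl rfl
  | symm x y _ ih => exact ih.imp Eq.symm And.symm
  | trans x y z _ _ ih₁ ih₂ =>
    rcases ih₁ with rfl | h₁
    · exact ih₂
    · exact .inr ⟨h₁.1, ih₂.elim (fun h => h ▸ h₁.2) And.right⟩

theorem mem_vertexSetOf : p ∈ vertexSetOf C ↔ ∃ δ ∈ C, p ∈ δ.vertexSet := by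
  simp only [vertexSetOf, Set.mem_iUnion, exists_prop]

theorem Minor2.HorizEdge.fst_eq {δ : Minor2 m n} (h : δ.HorizEdge p q) : p.1 = q.1 := by
  rcases h with h | h <;> rcases Set.pair_eq_pair_iff.1 h with ⟨rfl, rfl⟩ | ⟨rfl, rfl⟩ <;> rfl

theorem Minor2.VertEdge.snd_eq {δ : Minor2 m n} (h : δ.VertEdge p q) : p.2 = q.2 := by
  rcases h with h | h <;> rcases Set.pair_eq_pair_iff.1 h with ⟨rfl, rfl⟩ | ⟨rfl, rfl⟩ <;> rfl

theorem Minor2.IsEdge.mem_vertexSet {δ : Minor2 m n} (h : δ.IsEdge p q) :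
    p ∈ δ.vertexSet ∧ q ∈ δ.vertexSet := by
  rcases h with (h | h) | (h | h) <;>
    rcases Set.pair_eq_pair_iff.1 h with ⟨rfl, rfl⟩ | ⟨rfl, rfl⟩ <;> simp [Minor2.vertexSet]

theorem fst_eq_of_hClass_eq (h : hClass C p = hClass C q) : p.1 = q.1 :=
  congrArg (Quot.lift Prod.fst fun _ _ ⟨_, _, h⟩ => h.fst_eq) h

theorem snd_eq_of_vClass_eq (h : vClass C p = vClass C q) : p.2 = q.2 :=
  congrArg (Quot.lift Prod.snd fun _ _ ⟨_, _, h⟩ => h.snd_eq) h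

theorem eq_or_mem_of_vClass_eq (h : vClass C p = vClass C q) :
    p = q ∨ p ∈ vertexSetOf C ∧ q ∈ vertexSetOf C :=
  eq_or_mem_of_quot_mk_eq (fun _ _ ⟨δ, hδ, h⟩ =>
    have h := Minor2.IsEdge.mem_vertexSet (.inl h)
    ⟨mem_vertexSetOf.2 ⟨δ, hδ, h.1⟩, mem_vertexSetOf.2 ⟨δ, hδ, h.2⟩⟩) h

theorem CycleIn.isBipartiteCycle (σ : CycleIn C) :
    IsBipartiteCycle (hClass C) (vClass C) σ.p σ.q :=
  ⟨σ.shareV, σ.shareH, σ.injH, σ.injV⟩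

theorem IsBipartiteCycle.mem_vertexSetOf {r : ℕ} {p q : Fin (r + 2) → Fin m × Fin n}
    (h : IsBipartiteCycle (hClass C) (vClass C) p q) (k : Fin (r + 2)) :
    p k ∈ vertexSetOf C ∧ q k ∈ vertexSetOf C := by
  refine (eq_or_mem_of_vClass_eq (h.right_eq k)).resolve_left fun hk => ?_
  have hnext : hClass C (p k) = hClass C (p (k + 1)) := hk ▸ h.left_eq k
  simpa using h.left_injective hnext

variable {K : Type*} [Field K]

theorem toricIdeal_eq_span_cycleBinom :
    toricIdeal K C = Ideal.span (Set.range (cycleBinom K : CycleIn C → _)) := by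
  refine (ker_edgeHom (f := hClass C) (g := vClass C)).trans
    (le_antisymm (Ideal.span_le.2 ?_) (Ideal.span_mono ?_))
  · rintro _ ⟨r, p, q, h, rfl⟩
    cases r with
    | zero =>
      have hpq : p 0 = q 0 := Prod.ext (fst_eq_of_hClass_eq (h.left_eq 0).symm)
        (snd_eq_of_vClass_eq (h.right_eq 0))
      simp [hpq]
    | succ r =>
      exact Ideal.subset_span ⟨⟨r, p, q, fun k => (h.mem_vertexSetOf k).1,
        fun k => (h.mem_vertexSetOf k).2, h.right_eq, h.left_eq, h.left_injective,
        h.right_injective⟩, rfl⟩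
  · rintro _ ⟨σ, rfl⟩
    exact ⟨_, σ.p, σ.q, σ.isBipartiteCycle, rfl⟩

theorem toricIdeal_empty : toricIdeal K (∅ : Set (Minor2 m n)) = ⊥ := by
  have : IsEmpty (CycleIn (∅ : Set (Minor2 m n))) :=
    ⟨fun σ => by simpa [vertexSetOf] using σ.p_mem 0⟩
  rw [toricIdeal_eq_span_cycleBinom, Set.range_eq_empty, Ideal.span_empty]

instance toricIdeal_isPrime : (toricIdeal K C).IsPrime :=
  RingHom.ker_isPrime _

theorem X_notMem_toricIdeal : X p ∉ toricIdeal K C := by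
  simp [toricIdeal, RingHom.mem_ker, phiC]

theorem minorIdeal_le_toricIdeal : minorIdeal K C ≤ toricIdeal K C := by
  refine Ideal.span_le.2 ?_
  rintro _ ⟨δ, hδ, rfl⟩
  have htop : hClass C (δ.a1, δ.b1) = hClass C (δ.a1, δ.b2) := Quot.sound ⟨δ, hδ, .inl rfl⟩
  have hbottom : hClass C (δ.a2, δ.b1) = hClass C (δ.a2, δ.b2) := Quot.sound ⟨δ, hδ, .inr rfl⟩
  have hleft : vClass C (δ.a1, δ.b1) = vClass C (δ.a2, δ.b1) := Quot.sound ⟨δ, hδ, .inl rfl⟩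
  have hright : vClass C (δ.a1, δ.b2) = vClass C (δ.a2, δ.b2) := Quot.sound ⟨δ, hδ, .inr rfl⟩
  simp only [toricIdeal, SetLike.mem_coe, RingHom.mem_ker, Minor2.binom, phiC, map_sub, map_mul,
    aeval_X, htop, hbottom, hleft, hright]
  ring

theorem minorIdeal_mono {D : Set (Minor2 m n)} (h : D ⊆ C) : minorIdeal K D ≤ minorIdeal K C :=
  Ideal.span_mono fun _ ⟨δ, hδ, hf⟩ => ⟨δ, h hδ, hf⟩

end ToricIdeal

section PW

variable {m n : ℕ} {C : Set (Minor2 m n)} {W : Set (Fin m × Fin n)} {K : Type*} [Field K]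

theorem minorsAvoiding_subset : minorsAvoiding C W ⊆ C :=
  Set.sep_subset _ _

theorem notMem_of_mem_vertexSetOf_minorsAvoiding {p : Fin m × Fin n}
    (hp : p ∈ vertexSetOf (minorsAvoiding C W)) : p ∉ W := by
  obtain ⟨δ, hδ, hp⟩ := mem_vertexSetOf.1 hp
  exact Set.disjoint_left.1 (Set.disjoint_iff_inter_eq_empty.2 hδ.2) hp

theorem killVars_cycleBinom (σ : CycleIn (minorsAvoiding C W)) :
    killVars K W (cycleBinom K σ) = cycleBinom K σ := by
  simp only [cycleBinom, map_sub, map_prod,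
    killVars_X_of_notMem (notMem_of_mem_vertexSetOf_minorsAvoiding (σ.p_mem _)),
    killVars_X_of_notMem (notMem_of_mem_vertexSetOf_minorsAvoiding (σ.q_mem _))]

theorem PW_eq_comap_killVars :
    PW K C W = (toricIdeal K (minorsAvoiding C W)).comap (killVars K W) := by
  refine le_antisymm (sup_le ?_ ?_) fun f hf => ?_
  · exact (ker_killVars W).ge.trans (Ideal.comap_mono bot_le)
  · conv_lhs => rw [toricIdeal_eq_span_cycleBinom]
    refine Ideal.span_le.2 ?_
    rintro _ ⟨σ, rfl⟩
    rw [SetLike.mem_coe, Ideal.mem_comap, killVars_cycleBinom, toricIdeal_eq_span_cycleBinom]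
    exact Ideal.subset_span ⟨σ, rfl⟩
  · rw [← sub_add_cancel f (killVars K W f)]
    exact Submodule.add_mem_sup (sub_killVars_mem_span W f) hf

instance PW_isPrime : (PW K C W).IsPrime := by
  rw [PW_eq_comap_killVars]
  infer_instance

theorem Minor2.IsEdge.binom_mem {δ : Minor2 m n} {p q : Fin m × Fin n} (h : δ.IsEdge p q)
    {P : Ideal (MvPolynomial (Fin m × Fin n) K)} (hp : X p ∈ P) (hq : X q ∈ P) :
    Minor2.binom K δ ∈ P := by
  rcases h with (h | h) | (h | h) <;>
    rcases Set.pair_eq_pair_iff.1 h with ⟨rfl, rfl⟩ | ⟨rfl, rfl⟩ <;>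
      refine P.sub_mem ?_ ?_ <;>
        first
        | exact P.mul_mem_left _ ‹_›
        | exact P.mul_mem_right _ ‹_›

theorem minorIdeal_le_PW (hW : Admissible C W) : minorIdeal K C ≤ PW K C W := by
  refine Ideal.span_le.2 ?_
  rintro _ ⟨δ, hδ, rfl⟩
  rcases hW.2 δ hδ with h | ⟨p, q, hp, hq, hpq⟩
  · exact Ideal.mem_sup_right (minorIdeal_le_toricIdeal
      (Ideal.subset_span ⟨δ, ⟨hδ, Set.inter_comm W _ ▸ h⟩, rfl⟩))
  · exact Ideal.mem_sup_left (hpq.binom_mem (Ideal.subset_span (Set.mem_image_of_mem X hp))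
      (Ideal.subset_span (Set.mem_image_of_mem X hq)))

theorem Minor2.exists_isEdge_of_binom_mem {δ : Minor2 m n} {p : Fin m × Fin n}
    {P : Ideal (MvPolynomial (Fin m × Fin n) K)} [P.IsPrime] (hδ : Minor2.binom K δ ∈ P)
    (hpδ : p ∈ δ.vertexSet) (hp : X p ∈ P) : ∃ q, δ.IsEdge p q ∧ X q ∈ P := by
  have hmul : (X (δ.a1, δ.b1) * X (δ.a2, δ.b2) : MvPolynomial _ K) ∈ P ↔
      (X (δ.a1, δ.b2) * X (δ.a2, δ.b1) : MvPolynomial _ K) ∈ P :=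
    ⟨fun h => (P.sub_mem_iff_right h).1 hδ, fun h => (P.sub_mem_iff_left h).1 hδ⟩
  simp only [Ideal.IsPrime.mul_mem_iff_mem_or_mem] at hmul
  simp only [Minor2.IsEdge, Minor2.VertEdge, Minor2.HorizEdge]
  rcases hpδ with rfl | rfl | rfl | rfl
  · rcases hmul.1 (.inl hp) with h | h
    exacts [⟨_, .inr (.inl rfl), h⟩, ⟨_, .inl (.inl rfl), h⟩]
  · rcases hmul.2 (.inl hp) with h | h
    exacts [⟨_, .inr (.inl (Set.pair_comm _ _)), h⟩, ⟨_, .inl (.inr rfl), h⟩]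
  · rcases hmul.2 (.inr hp) with h | h
    exacts [⟨_, .inl (.inl (Set.pair_comm _ _)), h⟩, ⟨_, .inr (.inr rfl), h⟩]
  · rcases hmul.1 (.inr hp) with h | h
    exacts [⟨_, .inl (.inr (Set.pair_comm _ _)), h⟩, ⟨_, .inr (.inr (Set.pair_comm _ _)), h⟩]

theorem admissible_setOf_X_mem {P : Ideal (MvPolynomial (Fin m × Fin n) K)} [P.IsPrime]
    (hP : minorIdeal K C ≤ P) : Admissible C {p ∈ vertexSetOf C | X p ∈ P} := by
  refine ⟨Set.sep_subset _ _, fun δ hδ => ?_⟩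
  rw [or_iff_not_imp_left]
  intro h
  obtain ⟨p, ⟨hpC, hpP⟩, hpδ⟩ := Set.nonempty_iff_ne_empty.2 h
  obtain ⟨q, hpq, hqP⟩ :=
    Minor2.exists_isEdge_of_binom_mem (hP (Ideal.subset_span ⟨δ, hδ, rfl⟩)) hpδ hpP
  exact ⟨p, q, ⟨hpC, hpP⟩, ⟨mem_vertexSetOf.2 ⟨δ, hδ, hpq.mem_vertexSet.2⟩, hqP⟩, hpq⟩

end PW

section CornerRelation

theorem mul_prod_eq_mul_prod_of_telescope {M : Type*} [CommMonoid M] {N : ℕ} {z : M}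
    {y : Fin (N + 1) → M} {P Q : Fin N → M}
    (h : ∀ i, z * (y i.castSucc * P i) = z * (y i.succ * Q i)) :
    z * (y 0 * ∏ i, P i) = z * (y (Fin.last N) * ∏ i, Q i) := by
  induction N with
  | zero => simp
  | succ N ih =>
    have hinit : z * (y 0 * ∏ i : Fin N, P i.castSucc) =
        z * (y (Fin.last N).castSucc * ∏ i : Fin N, Q i.castSucc) :=
      ih (y := fun i => y i.castSucc) fun i => h i.castSucc
    have hlast := h (Fin.last N)
    simp only [Fin.succ_last] at hlast
    rw [Fin.prod_univ_castSucc, Fin.prod_univ_castSucc]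
    calc
      _ = z * (y 0 * ∏ i : Fin N, P i.castSucc) * P (Fin.last N) := by ac_rfl
      _ = z * (y (Fin.last N).castSucc * P (Fin.last N)) * ∏ i : Fin N, Q i.castSucc := by
        rw [hinit]; ac_rfl
      _ = _ := by rw [hlast]; ac_rfl

/-- A closed path `p 0, q 0, p 1, q 1, …` of positions in `V` which alternately moves within a
column (from `p k` to `q k`) and within a row (from `q k` to `p (k + 1)`). -/
structure IsClosedGridPath {α β : Type*} (V : Set (α × β)) {N : ℕ} (p q : Fin (N + 1) → α × β) :
    Prop where
  p_mem : ∀ k, p k ∈ V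
  q_mem : ∀ k, q k ∈ V
  snd_eq : ∀ k, (p k).2 = (q k).2
  fst_eq : ∀ k, (q k).1 = (p (k + 1)).1

theorem IsClosedGridPath.rotate {α β : Type*} {V : Set (α × β)} {N : ℕ}
    {p q : Fin (N + 1) → α × β} (h : IsClosedGridPath V p q) (k₀ : Fin (N + 1)) :
    IsClosedGridPath V (fun k => p (k + k₀)) fun k => q (k + k₀) :=
  ⟨fun _ => h.p_mem _, fun _ => h.q_mem _, fun _ => h.snd_eq _, fun k => by
    rw [h.fst_eq, add_right_comm]⟩

theorem IsClosedGridPath.transpose {α β : Type*} {V : Set (α × β)} {N : ℕ}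
    {p q : Fin (N + 1) → α × β} (h : IsClosedGridPath V p q) :
    IsClosedGridPath (Prod.swap ⁻¹' V) (fun k => (q k).swap) fun k => (p (k + 1)).swap :=
  ⟨fun k => h.q_mem k, fun k => h.p_mem (k + 1), fun k => h.fst_eq k, fun k => h.snd_eq (k + 1)⟩

theorem CycleIn.isClosedGridPath {m n : ℕ} {C : Set (Minor2 m n)} (σ : CycleIn C) :
    IsClosedGridPath (vertexSetOf C) σ.p σ.q :=
  ⟨σ.p_mem, σ.q_mem, fun k => snd_eq_of_vClass_eq (σ.shareV k),
    fun k => fst_eq_of_hClass_eq (σ.shareH k)⟩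

variable {m n : ℕ} [NeZero m] [NeZero n]

/-- The relations `x₁₁ x_{ab} = x_{1b} x_{a1}`, for the positions `(a, b)` in `V`, which the corner
minors impose on the entries of a matrix. -/
def CornerRelation {M : Type*} [Mul M] (V : Set (Fin m × Fin n)) (x : Fin m × Fin n → M) : Prop :=
  ∀ p ∈ V, x (0, 0) * x p = x (0, p.2) * x (p.1, 0)

variable {M : Type*} [CommMonoid M] {V : Set (Fin m × Fin n)} {x : Fin m × Fin n → M}

theorem CornerRelation.mul_mul_eq_of_fst_eq (hx : CornerRelation V x) {p q : Fin m × Fin n}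
    (hp : p ∈ V) (hq : q ∈ V) (hpq : p.1 = q.1) :
    x (0, 0) * (x (0, p.2) * x q) = x (0, 0) * (x (0, q.2) * x p) := by
  calc
    _ = x (0, p.2) * (x (0, 0) * x q) := mul_left_comm _ _ _
    _ = x (0, q.2) * (x (0, 0) * x p) := by rw [hx q hq, hx p hp, hpq, mul_left_comm]
    _ = _ := mul_left_comm _ _ _

theorem CornerRelation.transpose (hx : CornerRelation V x) :
    CornerRelation (Prod.swap ⁻¹' V) (x ∘ Prod.swap) :=
  fun p hp => (hx p.swap hp).trans (mul_comm _ _)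

variable {N : ℕ} {p q : Fin (N + 1) → Fin m × Fin n}

theorem IsClosedGridPath.pow_mul_prod_eq (h : IsClosedGridPath V p q) (hx : CornerRelation V x) :
    x (0, 0) ^ (N + 1) * ∏ k, x (p k) = x (0, 0) ^ (N + 1) * ∏ k, x (q k) := by
  have hpow (e : Fin (N + 1) → Fin m × Fin n) (he : ∀ k, e k ∈ V) :
      x (0, 0) ^ (N + 1) * ∏ k, x (e k) = (∏ k, x (0, (e k).2)) * ∏ k, x ((e k).1, 0) := by
    rw [← Finset.prod_mul_distrib, ← Finset.prod_congr rfl fun k _ => hx (e k) (he k),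
      Finset.prod_mul_distrib, Fin.prod_const]
  rw [hpow p h.p_mem, hpow q h.q_mem]
  simp only [h.snd_eq, h.fst_eq]
  exact congrArg _ (Equiv.prod_comp (Equiv.addRight 1) fun k => x ((p k).1, 0)).symm

theorem IsClosedGridPath.mul_prod_eq_of_zero_fst_eq_zero (h : IsClosedGridPath V p q)
    (hx : CornerRelation V x) (h0 : (p 0).1 = 0) :
    x (0, 0) * ∏ k, x (p k) = x (0, 0) * ∏ k, x (q k) := by
  have hfirst : p 0 = (0, (p 0).2) := Prod.ext h0 rfl
  have hlast : q (Fin.last N) = (0, (p (Fin.last N)).2) :=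
    Prod.ext (by rw [h.fst_eq, Fin.last_add_one, h0]) (h.snd_eq _).symm
  rw [Fin.prod_univ_succ, Fin.prod_univ_castSucc fun k => x (q k), hlast, hfirst,
    mul_comm (∏ _, _)]
  refine mul_prod_eq_mul_prod_of_telescope (y := fun k => x (0, (p k).2)) fun i => ?_
  rw [h.snd_eq]
  exact hx.mul_mul_eq_of_fst_eq (h.q_mem _) (h.p_mem _) (by rw [h.fst_eq, Fin.coeSucc_eq_succ])

theorem IsClosedGridPath.mul_prod_eq_of_fst_eq_zero (h : IsClosedGridPath V p q)
    (hx : CornerRelation V x) {k₀ : Fin (N + 1)} (h0 : (p k₀).1 = 0) :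
    x (0, 0) * ∏ k, x (p k) = x (0, 0) * ∏ k, x (q k) := by
  rw [← Equiv.prod_comp (Equiv.addRight k₀) fun k => x (p k),
    ← Equiv.prod_comp (Equiv.addRight k₀) fun k => x (q k)]
  exact (h.rotate k₀).mul_prod_eq_of_zero_fst_eq_zero hx (by rwa [zero_add])

theorem IsClosedGridPath.mul_prod_eq_of_snd_eq_zero (h : IsClosedGridPath V p q)
    (hx : CornerRelation V x) {k₀ : Fin (N + 1)} (h0 : (p k₀).2 = 0) :
    x (0, 0) * ∏ k, x (p k) = x (0, 0) * ∏ k, x (q k) := by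
  rw [← Equiv.prod_comp (Equiv.addRight 1) fun k => x (p k)]
  exact (h.transpose.mul_prod_eq_of_fst_eq_zero hx.transpose
    (k₀ := k₀) (by rw [Prod.fst_swap, ← h.snd_eq, h0])).symm

end CornerRelation

section Corner

variable {K : Type*} [Field K] {m n : ℕ} [NeZero m] [NeZero n] {C : Set (Minor2 m n)}

theorem X_mul_X_sub_mem_minorIdeal (hC : ∀ δ ∈ C, δ.a1 = 0 ∧ δ.b1 = 0) {p : Fin m × Fin n}
    (hp : p ∈ vertexSetOf C) :
    X (0, 0) * X p - X (0, p.2) * X (p.1, 0) ∈ minorIdeal K C := by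
  obtain ⟨δ, hδ, hp⟩ := mem_vertexSetOf.1 hp
  obtain ⟨ha, hb⟩ := hC δ hδ
  have hbinom : Minor2.binom K δ ∈ minorIdeal K C := Ideal.subset_span ⟨δ, hδ, rfl⟩
  rw [Minor2.binom, ha, hb] at hbinom
  rcases hp with rfl | rfl | rfl | rfl
  · simp [ha, hb]
  · simp [ha, mul_comm]
  · simp [hb]
  · exact hbinom

theorem cornerRelation_mk_X (hC : ∀ δ ∈ C, δ.a1 = 0 ∧ δ.b1 = 0) :
    CornerRelation (vertexSetOf C) fun p => Ideal.Quotient.mk (minorIdeal K C) (X p) := by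
  intro p hp
  rw [← map_mul, ← map_mul, Ideal.Quotient.mk_eq_mk_iff_sub_mem]
  exact X_mul_X_sub_mem_minorIdeal hC hp

theorem X_pow_mul_cycleBinom_mem_minorIdeal (hC : ∀ δ ∈ C, δ.a1 = 0 ∧ δ.b1 = 0) (σ : CycleIn C) :
    X (0, 0) ^ (σ.len + 2) * cycleBinom K σ ∈ minorIdeal K C := by
  rw [cycleBinom, mul_sub, ← Ideal.Quotient.mk_eq_mk_iff_sub_mem]
  simp only [map_mul, map_pow, map_prod]
  exact σ.isClosedGridPath.pow_mul_prod_eq (cornerRelation_mk_X hC)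

theorem X_mul_cycleBinom_mem_minorIdeal (hC : ∀ δ ∈ C, δ.a1 = 0 ∧ δ.b1 = 0) (σ : CycleIn C)
    {k : Fin (σ.len + 2)} (h0 : (σ.p k).1 = 0 ∨ (σ.p k).2 = 0) :
    X (0, 0) * cycleBinom K σ ∈ minorIdeal K C := by
  rw [cycleBinom, mul_sub, ← Ideal.Quotient.mk_eq_mk_iff_sub_mem]
  simp only [map_mul, map_prod]
  rcases h0 with h0 | h0
  · exact σ.isClosedGridPath.mul_prod_eq_of_fst_eq_zero (cornerRelation_mk_X hC) h0
  · exact σ.isClosedGridPath.mul_prod_eq_of_snd_eq_zero (cornerRelation_mk_X hC) h0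

theorem toricIdeal_le_of_X_notMem (hC : ∀ δ ∈ C, δ.a1 = 0 ∧ δ.b1 = 0)
    {P : Ideal (MvPolynomial (Fin m × Fin n) K)} [P.IsPrime] (hP : minorIdeal K C ≤ P)
    (hX : X (0, 0) ∉ P) : toricIdeal K C ≤ P := by
  rw [toricIdeal_eq_span_cycleBinom, Ideal.span_le]
  rintro _ ⟨σ, rfl⟩
  exact (Ideal.IsPrime.mem_or_mem ‹_› (hP (X_pow_mul_cycleBinom_mem_minorIdeal hC σ))).resolve_left
    (mt (Ideal.IsPrime.mem_of_pow_mem ‹_› _) hX)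

theorem minorIdeal_sup_span_X (hC : ∀ δ ∈ C, δ.a1 = 0 ∧ δ.b1 = 0) :
    minorIdeal K C ⊔ Ideal.span {X (0, 0)} =
      Ideal.span ((fun d => monomial d 1) '' insert (Finsupp.single (0, 0) 1)
        ((fun δ => Finsupp.single (0, δ.b2) 1 + Finsupp.single (δ.a2, 0) 1) '' C)) := by
  have hX : X (0, 0) ∈ minorIdeal K C ⊔ Ideal.span {X (0, 0)} :=
    Ideal.mem_sup_right (Ideal.mem_span_singleton_self _)
  have hbinom (δ : Minor2 m n) (hδ : δ ∈ C) : Minor2.binom K δ = X (δ.a2, δ.b2) * X (0, 0) -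
      monomial (Finsupp.single (0, δ.b2) 1 + Finsupp.single (δ.a2, 0) 1) 1 := by
    rw [Minor2.binom, (hC δ hδ).1, (hC δ hδ).2, mul_comm, X, X, X, X, monomial_mul, monomial_mul,
      one_mul]
  refine le_antisymm (sup_le (Ideal.span_le.2 ?_) (Ideal.span_le.2 ?_)) (Ideal.span_le.2 ?_)
  · rintro _ ⟨δ, hδ, rfl⟩
    rw [hbinom δ hδ]
    exact Ideal.sub_mem _ (Ideal.mul_mem_left _ _ (Ideal.subset_span ⟨_, .inl rfl, rfl⟩))
      (Ideal.subset_span ⟨_, .inr ⟨δ, hδ, rfl⟩, rfl⟩)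
  · rintro _ rfl
    exact Ideal.subset_span ⟨_, .inl rfl, rfl⟩
  · rintro _ ⟨_, rfl | ⟨δ, hδ, rfl⟩, rfl⟩
    · exact hX
    · refine (Submodule.sub_mem_iff_right _ (Ideal.mul_mem_left _ (X (δ.a2, δ.b2)) hX)).1 ?_
      rw [← hbinom δ hδ]
      exact Ideal.mem_sup_left (Ideal.subset_span ⟨δ, hδ, rfl⟩)

theorem isRadical_minorIdeal_sup_span_X (hC : ∀ δ ∈ C, δ.a1 = 0 ∧ δ.b1 = 0) :
    (minorIdeal K C ⊔ Ideal.span {X (0, 0)}).IsRadical := by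
  rw [minorIdeal_sup_span_X hC]
  refine isRadical_span_monomial ?_
  rintro _ (rfl | ⟨δ, hδ, rfl⟩) p
  · rw [Finsupp.single_apply]
    split_ifs <;> simp
  · have hne : (0, δ.b2) ≠ (δ.a2, (0 : Fin n)) := fun h =>
      ((hC δ hδ).1 ▸ δ.ha).ne (congrArg Prod.fst h)
    rw [Finsupp.add_apply, Finsupp.single_apply, Finsupp.single_apply]
    grind

theorem radical_minorIdeal (hC : ∀ δ ∈ C, δ.a1 = 0 ∧ δ.b1 = 0) :
    (minorIdeal K C).radical = minorIdeal K C ⊔ Ideal.span {X (0, 0)} * toricIdeal K C := by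
  refine le_antisymm (fun f hf => ?_) (sup_le Ideal.le_radical ?_)
  · have hfJ : f ∈ toricIdeal K C :=
      (toricIdeal_isPrime.isRadical.radical_le_iff).2 minorIdeal_le_toricIdeal hf
    obtain ⟨i, hi, j, hj, rfl⟩ := Submodule.mem_sup.1 (isRadical_minorIdeal_sup_span_X hC
      (Ideal.radical_mono le_sup_left hf))
    obtain ⟨g, rfl⟩ := Ideal.mem_span_singleton.1 hj
    have hg : g ∈ toricIdeal K C :=
      (toricIdeal_isPrime.mem_or_mem ((Ideal.add_mem_iff_right _ (minorIdeal_le_toricIdeal hi)).1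
        hfJ)).resolve_left X_notMem_toricIdeal
    exact Submodule.add_mem_sup hi (Ideal.mul_mem_mul (Ideal.mem_span_singleton_self _) hg)
  · rw [Ideal.radical_eq_sInf]
    refine le_sInf fun P ⟨hP, hPprime⟩ => Ideal.mul_le.2 fun z hz f hf => ?_
    by_cases hX : X (0, 0) ∈ P
    · exact P.mul_mem_right f ((Ideal.span_singleton_le_iff_mem P).2 hX hz)
    · exact P.mul_mem_left z (toricIdeal_le_of_X_notMem hC hP hX hf)

variable (K C) in
/-- The ideal generated by the products `x₁₁ f_σ`, where `σ` runs through the cycles of `G(C)` which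
pass through neither `v₁` nor `h₁`. -/
noncomputable def offCornerCycleIdeal : Ideal (MvPolynomial (Fin m × Fin n) K) :=
  Ideal.span {g | ∃ σ : CycleIn C,
    (∀ k, vClass C (σ.p k) ≠ vClass C (0, 0)) ∧
    (∀ k, hClass C (σ.p k) ≠ hClass C (0, 0)) ∧
    g = X (0, 0) * cycleBinom K σ}

theorem minorIdeal_sup_span_X_mul_toricIdeal (hC : ∀ δ ∈ C, δ.a1 = 0 ∧ δ.b1 = 0) :
    minorIdeal K C ⊔ Ideal.span {X (0, 0)} * toricIdeal K C =
      minorIdeal K C + offCornerCycleIdeal K C := by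
  refine le_antisymm (sup_le le_sup_left ?_) (sup_le_sup_left (Ideal.span_le.2 ?_) _)
  · rw [toricIdeal_eq_span_cycleBinom, Ideal.span_mul_span', Set.singleton_mul, Ideal.span_le]
    rintro _ ⟨_, ⟨σ, rfl⟩, rfl⟩
    by_cases h0 : ∃ k, (σ.p k).1 = 0 ∨ (σ.p k).2 = 0
    · obtain ⟨k, hk⟩ := h0
      exact Ideal.mem_sup_left (X_mul_cycleBinom_mem_minorIdeal hC σ hk)
    · push Not at h0
      exact Ideal.mem_sup_right (Ideal.subset_span
        ⟨σ, fun k h => (h0 k).2 (snd_eq_of_vClass_eq h),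
          fun k h => (h0 k).1 (fst_eq_of_hClass_eq h), rfl⟩)
  · rintro _ ⟨σ, -, -, rfl⟩
    refine Ideal.mul_mem_mul (Ideal.mem_span_singleton_self _) ?_
    rw [toricIdeal_eq_span_cycleBinom]
    exact Ideal.subset_span ⟨σ, rfl⟩

theorem minorsAvoiding_setOf_X_mem_eq_empty (hC : ∀ δ ∈ C, δ.a1 = 0 ∧ δ.b1 = 0)
    {P : Ideal (MvPolynomial (Fin m × Fin n) K)} (hX : X (0, 0) ∈ P) :
    minorsAvoiding C {p ∈ vertexSetOf C | X p ∈ P} = ∅ := by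
  refine Set.eq_empty_of_forall_notMem fun δ ⟨hδ, hdisj⟩ => ?_
  have hcorner : (0, 0) ∈ δ.vertexSet := by simp [Minor2.vertexSet, hC δ hδ]
  exact (Set.disjoint_iff_inter_eq_empty.2 hdisj).notMem_of_mem_left hcorner
    ⟨mem_vertexSetOf.2 ⟨δ, hδ, hcorner⟩, hX⟩

theorem PW_setOf_X_mem_le (hC : ∀ δ ∈ C, δ.a1 = 0 ∧ δ.b1 = 0)
    {P : Ideal (MvPolynomial (Fin m × Fin n) K)} [P.IsPrime] (hP : minorIdeal K C ≤ P) :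
    PW K C {p ∈ vertexSetOf C | X p ∈ P} ≤ P := by
  refine sup_le (Ideal.span_le.2 ?_) ?_
  · rintro _ ⟨p, hp, rfl⟩
    exact hp.2
  by_cases hX : X (0, 0) ∈ P
  · rw [minorsAvoiding_setOf_X_mem_eq_empty hC hX, toricIdeal_empty]
    exact bot_le
  · exact toricIdeal_le_of_X_notMem (fun δ hδ => hC δ hδ.1)
      ((minorIdeal_mono minorsAvoiding_subset).trans hP) hX

theorem exists_admissible_PW_eq_of_mem_minimalPrimes (hC : ∀ δ ∈ C, δ.a1 = 0 ∧ δ.b1 = 0)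
    {P : Ideal (MvPolynomial (Fin m × Fin n) K)} (hP : P ∈ (minorIdeal K C).minimalPrimes) :
    ∃ W, Admissible C W ∧ PW K C W = P := by
  have := hP.1.1
  have hW := admissible_setOf_X_mem hP.1.2
  have hle := PW_setOf_X_mem_le hC hP.1.2
  exact ⟨_, hW, hle.antisymm (hP.2 ⟨PW_isPrime, minorIdeal_le_PW hW⟩ hle)⟩

theorem iInf_PW_eq_radical (hC : ∀ δ ∈ C, δ.a1 = 0 ∧ δ.b1 = 0) :
    ⨅ W ∈ {W | Admissible C W ∧ PW K C W ∈ (minorIdeal K C).minimalPrimes}, PW K C W =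
      (minorIdeal K C).radical := by
  rw [← Ideal.sInf_minimalPrimes]
  refine le_antisymm (le_sInf fun P hP => ?_) (le_iInf₂ fun W hW => sInf_le hW.2)
  obtain ⟨W, hW, rfl⟩ := exists_admissible_PW_eq_of_mem_minimalPrimes hC hP
  exact iInf₂_le W ⟨hW, hP⟩

end Corner

theorem statement11 (K : Type*) [Field K] (m n : ℕ) [NeZero m] [NeZero n]
    (C : Set (Minor2 m n)) (hC : ∀ δ ∈ C, δ.a1 = 0 ∧ δ.b1 = 0) :
    (⨅ W ∈ {W : Set (Fin m × Fin n) |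
        Admissible C W ∧ PW K C W ∈ (minorIdeal K C).minimalPrimes},
      PW K C W) =
      minorIdeal K C + Ideal.span {g : MvPolynomial (Fin m × Fin n) K |
        ∃ σ : CycleIn C,
          (∀ k, vClass C (σ.p k) ≠ vClass C ((0 : Fin m), (0 : Fin n))) ∧
          (∀ k, hClass C (σ.p k) ≠ hClass C ((0 : Fin m), (0 : Fin n))) ∧
          g = X ((0 : Fin m), (0 : Fin n)) * cycleBinom K σ} ∧
    (minorIdeal K C).radical =
      minorIdeal K C + Ideal.span {g : MvPolynomial (Fin m × Fin n) K |
        ∃ σ : CycleIn C,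
          (∀ k, vClass C (σ.p k) ≠ vClass C ((0 : Fin m), (0 : Fin n))) ∧
          (∀ k, hClass C (σ.p k) ≠ hClass C ((0 : Fin m), (0 : Fin n))) ∧
          g = X ((0 : Fin m), (0 : Fin n)) * cycleBinom K σ} := by
  have hrad := (radical_minorIdeal (K := K) hC).trans (minorIdeal_sup_span_X_mul_toricIdeal hC)
  exact ⟨(iInf_PW_eq_radical hC).trans hrad, hrad⟩
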